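/- For every odd integer t ≥ 1 and every ε > 0 there exists N such that for all n ≥ N there exists a bipartite graph G on n vertices containing no subgraph isomorphic to B_t with e(G) ≥ (√⌊(t+1)/2⌋/(2√2) − ε)·n^{3/2}. (That is, ex_bip(n, B_t) ≥ (√⌊(t+1)/2⌋/(2√2))(1+o(1))·n^{3/2} for odd t.) -/

import Mathlib

open SimpleGraph

/-- `F` is contained in `G` as a subgraph: there is an injective map preserving adjacency. -/
def ContainsCopy {α β : Type*} (F : SimpleGraph α) (G : SimpleGraph β) : Prop :=
  ∃ f : α → β, Function.Injective f ∧ ∀ ⦃a b : α⦄, F.Adj a b → G.Adj (f a) (f b)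

/-- `Bgraph t = K₂ □ S_t`, the Cartesian product of an edge and a star with `t` edges. -/
def Bgraph (t : ℕ) : SimpleGraph (Fin 2 × (Fin 1 ⊕ Fin t)) :=
  (⊤ : SimpleGraph (Fin 2)).boxProd (completeBipartiteGraph (Fin 1) (Fin t))

/-!
Blow up the Levi graph of the projective plane over `𝔽_q`, replacing every vertex by `k` independent
copies. The Levi graph has no 4-cycle, so in a copy of `B_t` every page has an outer vertex lying in
the same blow-up class as the opposite vertex of the spine. Each of the two spine vertices accounts
for at most `k - 1` pages in this way, hence `t ≤ 2k - 2`, which `k = ⌊(t + 1) / 2⌋` forbids.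

To have such a plane with `2k(q² + q + 1)` at most, and asymptotically equal to, `n`, one needs a
prime power `q` in `[αx, βx]` for any `0 < α < β` and all large `x`. This is a soft form of the
Wiener-Ikehara theorem. Pair `L(s) = ∑ₙ Λ n / nˢ` on the line `Re s = 1` with a compactly supported
`φ`: the result is `∑ₙ (Λ n / n) 𝓕 φ (log n - u)`, which tends to `φ 0` as `u → ∞` by the
Riemann-Lebesgue lemma, because `L(s) - 1 / (s - 1)` is continuous on `Re s ≥ 1`. If `𝓕 φ ≤ 0` off
`[-δ, δ]` and `φ 0 > 0`, then for large `u` some `n` with `Λ n ≠ 0` satisfies `|log n - u| ≤ δ`.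
-/

section Graphs

variable {V W : Type*}

lemma containsCopy_iff_isContained {F : SimpleGraph V} {G : SimpleGraph W} :
    ContainsCopy F G ↔ F ⊑ G :=
  ⟨fun ⟨f, hf, hadj⟩ ↦ ⟨⟨⟨f, fun h ↦ hadj h⟩, hf⟩⟩,
    fun ⟨f⟩ ↦ ⟨f, f.injective, fun _ _ h ↦ f.toHom.map_adj h⟩⟩

lemma isContained_of_isContained_map {X : Type*} {F : SimpleGraph X} {G : SimpleGraph V}
    {e : V ↪ W} (hF : ∀ x, ∃ y, F.Adj x y) (h : F ⊑ G.map e) : F ⊑ G := by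
  obtain ⟨f⟩ := h
  have lift (x : X) : ∃ v, e v = f x := by
    obtain ⟨y, hxy⟩ := hF x
    obtain ⟨-, v, -, -, hv, -⟩ := f.toHom.map_adj hxy
    exact ⟨v, hv⟩
  choose g hg using lift
  refine ⟨⟨⟨g, fun {x y} hxy ↦ ?_⟩, fun x y hxy ↦ f.injective ?_⟩⟩
  · have := f.toHom.map_adj hxy
    rwa [Copy.toHom_apply, Copy.toHom_apply, ← hg, ← hg, map_adj_apply] at this
  · exact (hg x).symm.trans ((congrArg e hxy).trans (hg y))

lemma cycleGraph_four_free_iff {G : SimpleGraph V} :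
    (cycleGraph 4).Free G ↔
      ∀ ⦃a b c d⦄, G.Adj a b → G.Adj b c → G.Adj c d → G.Adj d a → a = c ∨ b = d := by
  refine ⟨fun hG a b c d hab hbc hcd hda ↦ ?_, fun hG ⟨f⟩ ↦ ?_⟩
  · by_contra! hne
    refine hG ⟨⟨⟨![a, b, c, d], fun {i j} hij ↦ ?_⟩, fun i j hij ↦ ?_⟩⟩
    · fin_cases i <;> fin_cases j <;> first | exact absurd hij (by decide) | simp_all [G.adj_comm]
    · have := hab.ne; have := hbc.ne; have := hcd.ne; have := hda.ne
      fin_cases i <;> fin_cases j <;> simp_all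
  · have adj {i j : Fin 4} (h : (cycleGraph 4).Adj i j) : G.Adj (f i) (f j) := f.toHom.map_adj h
    rcases hG (adj (i := 0) (j := 1) (by decide)) (adj (j := 2) (by decide))
      (adj (j := 3) (by decide)) (adj (by decide)) with h | h
    · exact absurd (f.injective h) (by decide)
    · exact absurd (f.injective h) (by decide)

lemma two_mul_ncard_edgeSet_of_isRegularOfDegree [Fintype V] {G : SimpleGraph V}
    [DecidableRel G.Adj] {d : ℕ} (hG : G.IsRegularOfDegree d) :
    2 * G.edgeSet.ncard = Fintype.card V * d := by
  rw [← coe_edgeFinset, Set.ncard_coe_finset, ← G.sum_degrees_eq_twice_card_edges]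
  simp [hG.degree_eq]

end Graphs

section Levi

variable (P L : Type*) [Membership P L]

/-- The Levi graph (point-line incidence graph) of the configuration with point set `P` and line
set `L`. -/
def leviGraph : SimpleGraph (P ⊕ L) where
  Adj
    | .inl p, .inr l => p ∈ l
    | .inr l, .inl p => p ∈ l
    | _, _ => False
  symm := ⟨by rintro (p | l) (p' | l') h <;> exact h⟩
  loopless := ⟨by rintro (p | l) h <;> exact h⟩

variable {P L} {p p' : P} {l l' : L}

@[simp] lemma leviGraph_adj_inl_inr : (leviGraph P L).Adj (.inl p) (.inr l) ↔ p ∈ l := Iff.rfl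

@[simp] lemma leviGraph_adj_inr_inl : (leviGraph P L).Adj (.inr l) (.inl p) ↔ p ∈ l := Iff.rfl

@[simp] lemma not_leviGraph_adj_inl_inl : ¬ (leviGraph P L).Adj (.inl p) (.inl p') := id

@[simp] lemma not_leviGraph_adj_inr_inr : ¬ (leviGraph P L).Adj (.inr l) (.inr l') := id

variable (P L)

lemma leviGraph_colorable : (leviGraph P L).Colorable 2 := by
  have c : (leviGraph P L).Coloring Bool :=
    .mk Sum.isLeft <| by rintro (p | l) (p' | l') h <;> simp at h ⊢
  exact c.colorable

lemma cycleGraph_four_free_leviGraph [Configuration.Nondegenerate P L] :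
    (cycleGraph 4).Free (leviGraph P L) := by
  rw [cycleGraph_four_free_iff]
  rintro (a | a) (b | b) (c | c) (d | d) hab hbc hcd hda <;>
    simp only [leviGraph_adj_inl_inr, leviGraph_adj_inr_inl, not_leviGraph_adj_inl_inl,
      not_leviGraph_adj_inr_inr] at hab hbc hcd hda
  · simpa using Configuration.Nondegenerate.eq_or_eq hab hbc hda hcd
  · simpa [or_comm] using Configuration.Nondegenerate.eq_or_eq hab hda hbc hcd

open Configuration in
lemma leviGraph_isRegularOfDegree [ProjectivePlane P L] [Fintype P] [Fintype L]
    [DecidableRel (leviGraph P L).Adj] :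
    (leviGraph P L).IsRegularOfDegree (ProjectivePlane.order P L + 1) := by
  classical
  rintro (p | l)
  · have : (leviGraph P L).neighborFinset (.inl p) =
        (Finset.univ.filter (p ∈ · : L → Prop)).map .inr := by
      ext (p' | l) <;> simp
    rw [← card_neighborFinset_eq_degree, this, Finset.card_map, ← ProjectivePlane.lineCount_eq L p,
      lineCount, Nat.card_eq_fintype_card, Fintype.card_subtype]
  · have : (leviGraph P L).neighborFinset (.inr l) =
        (Finset.univ.filter (· ∈ l : P → Prop)).map .inl := by
      ext (p | l') <;> simp
    rw [← card_neighborFinset_eq_degree, this, Finset.card_map, ← ProjectivePlane.pointCount_eq P l,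
      pointCount, Nat.card_eq_fintype_card, Fintype.card_subtype]

end Levi

section FieldPlane

open scoped LinearAlgebra.Projectivization

lemma order_projectivization (K : Type*) [Field K] [Finite K] [DecidableEq K] :
    Configuration.ProjectivePlane.order (ℙ K (Fin 3 → K)) (ℙ K (Fin 3 → K)) = Nat.card K := by
  have := Fintype.ofFinite (ℙ K (Fin 3 → K))
  have hcard := Configuration.ProjectivePlane.card_points (ℙ K (Fin 3 → K)) (ℙ K (Fin 3 → K))
  rw [← Nat.card_eq_fintype_card, Projectivization.card_of_finrank K _ (n := 3) (by simp)] at hcard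
  simp only [Finset.sum_range_succ, Finset.sum_range_zero] at hcard
  nlinarith

end FieldPlane

section BlowUp

variable {V : Type*} (G : SimpleGraph V) (ι : Type*)

/-- The balanced blow-up of `G`: each vertex `v` is replaced by the independent set `{v} × ι`, and
each edge by a complete bipartite graph. -/
def blowUp : SimpleGraph (V × ι) := G.comap Prod.fst

variable {G ι}

lemma blowUp_adj {x y : V × ι} : (blowUp G ι).Adj x y ↔ G.Adj x.1 y.1 := Iff.rfl

lemma blowUp_colorable {n : ℕ} (hG : G.Colorable n) : (blowUp G ι).Colorable n :=
  hG.of_hom (Hom.comap Prod.fst G)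

lemma blowUp_isRegularOfDegree [Fintype V] [Fintype ι] [DecidableRel G.Adj]
    [DecidableRel (blowUp G ι).Adj] {d : ℕ} (hG : G.IsRegularOfDegree d) :
    (blowUp G ι).IsRegularOfDegree (d * Fintype.card ι) := by
  intro x
  have : (blowUp G ι).neighborFinset x = G.neighborFinset x.1 ×ˢ Finset.univ := by
    ext y; simp [blowUp_adj]
  rw [← card_neighborFinset_eq_degree, this, Finset.card_product, card_neighborFinset_eq_degree,
    hG.degree_eq, Finset.card_univ]

end BlowUp

section Book

lemma Bgraph_exists_adj {t : ℕ} (x : Fin 2 × (Fin 1 ⊕ Fin t)) : ∃ y, (Bgraph t).Adj x y :=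
  ⟨(x.1 + 1, x.2), by simp [Bgraph, boxProd_adj]⟩

lemma Bgraph_adj_page {t : ℕ} {s s' : Fin 2} (h : s ≠ s') (i : Fin t) :
    (Bgraph t).Adj (s, .inl 0) (s', .inl 0) ∧ (Bgraph t).Adj (s', .inl 0) (s', .inr i) ∧
      (Bgraph t).Adj (s', .inr i) (s, .inr i) ∧ (Bgraph t).Adj (s, .inr i) (s, .inl 0) := by
  simp [Bgraph, boxProd_adj, h, h.symm]

lemma card_le_card_of_forall_fst_eq {X V ι : Type*} [Fintype ι] {f : X → V × ι}
    (hf : f.Injective) {T : Finset X} {v : V} (hT : ∀ x ∈ T, (f x).1 = v) :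
    T.card ≤ Fintype.card ι := by
  refine Finset.card_le_card_of_injOn (fun x ↦ (f x).2) (by simp) fun x hx y hy hxy ↦ ?_
  exact hf (Prod.ext ((hT x hx).trans (hT y hy).symm) hxy)

lemma Bgraph_card_page_lt {t : ℕ} {V ι : Type*} [Fintype ι] {f : Fin 2 × (Fin 1 ⊕ Fin t) → V × ι}
    (hf : f.Injective) {s s' : Fin 2} {T : Finset (Fin t)}
    (hT : ∀ i ∈ T, (f (s', .inr i)).1 = (f (s, .inl 0)).1) : T.card < Fintype.card ι := by
  classical
  let U : Finset (Fin 2 × (Fin 1 ⊕ Fin t)) :=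
    insert (s, .inl 0) (T.image fun i ↦ (s', .inr i))
  have hU : U.card = T.card + 1 := by
    rw [Finset.card_insert_of_notMem (by simp), Finset.card_image_of_injective]
    exact fun i j h ↦ by simpa using h
  have : U.card ≤ Fintype.card ι :=
    card_le_card_of_forall_fst_eq hf (v := (f (s, .inl 0)).1) (by simpa [U] using hT)
  omega

theorem not_containsCopy_Bgraph_blowUp {V ι : Type*} [Fintype ι] {G : SimpleGraph V} {t : ℕ}
    (hG : (cycleGraph 4).Free G) (ht : 2 * Fintype.card ι ≤ t + 1) :
    ¬ ContainsCopy (Bgraph t) (blowUp G ι) := by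
  classical
  rintro ⟨f, hf, hadj⟩
  let page (s s' : Fin 2) : Finset (Fin t) := {i | (f (s', .inr i)).1 = (f (s, .inl 0)).1}
  have collapse (i : Fin t) : i ∈ page 0 1 ∪ page 1 0 := by
    obtain ⟨h₁, h₂, h₃, h₄⟩ := Bgraph_adj_page (zero_ne_one (α := Fin 2)) i
    have := cycleGraph_four_free_iff.1 hG (hadj h₁) (hadj h₂) (hadj h₃) (hadj h₄)
    simpa [page, eq_comm] using this
  have hcard : t ≤ (page 0 1).card + (page 1 0).card := by
    have := Finset.card_le_card (fun i _ ↦ collapse i : Finset.univ ⊆ _)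
    simpa using this.trans (Finset.card_union_le _ _)
  have hpage (s s' : Fin 2) : (page s s').card < Fintype.card ι :=
    Bgraph_card_page_lt hf (s := s) (s' := s') (by simp [page])
  have := hpage 0 1
  have := hpage 1 0
  omega

end Book

section Construction

open scoped LinearAlgebra.Projectivization

open Configuration in
lemma ncard_edgeSet_blowUp_leviGraph (P L ι : Type*) [Membership P L] [ProjectivePlane P L]
    [Finite P] [Finite L] [Fintype ι] :
    (blowUp (leviGraph P L) ι).edgeSet.ncard =
      Fintype.card ι ^ 2 * (ProjectivePlane.order P L ^ 2 + ProjectivePlane.order P L + 1) *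
        (ProjectivePlane.order P L + 1) := by
  classical
  have := Fintype.ofFinite P
  have := Fintype.ofFinite L
  have h := two_mul_ncard_edgeSet_of_isRegularOfDegree
    (blowUp_isRegularOfDegree (ι := ι) (leviGraph_isRegularOfDegree P L))
  rw [Fintype.card_prod, Fintype.card_sum, ProjectivePlane.card_points P L,
    ProjectivePlane.card_lines P L] at h
  linarith

open Configuration in
theorem exists_colorable_not_containsCopy_Bgraph {q k t n : ℕ} (hq : IsPrimePow q)
    (hk : 2 * k ≤ t + 1) (hn : 2 * k * (q ^ 2 + q + 1) ≤ n) :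
    ∃ G : SimpleGraph (Fin n), G.Colorable 2 ∧ ¬ ContainsCopy (Bgraph t) G ∧
      G.edgeSet.ncard = k ^ 2 * (q ^ 2 + q + 1) * (q + 1) := by
  classical
  obtain ⟨p, m, hp, hm, rfl⟩ := (isPrimePow_nat_iff q).1 hq
  have : Fact p.Prime := ⟨hp⟩
  let P := ℙ (GaloisField p m) (Fin 3 → GaloisField p m)
  have := Fintype.ofFinite P
  have order_eq : ProjectivePlane.order P P = p ^ m := by
    rw [order_projectivization, GaloisField.card p m hm.ne']
  obtain ⟨e⟩ : Nonempty ((P ⊕ P) × Fin k ↪ Fin n) := by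
    refine Function.Embedding.nonempty_of_card_le ?_
    rw [Fintype.card_prod, Fintype.card_sum, ProjectivePlane.card_points P P, order_eq]
    simp only [Fintype.card_fin]
    linarith
  refine ⟨(blowUp (leviGraph P P) (Fin k)).map e,
    (blowUp_colorable (leviGraph_colorable P P)).map e, fun h ↦ ?_, ?_⟩
  · refine not_containsCopy_Bgraph_blowUp (t := t) (ι := Fin k)
      (cycleGraph_four_free_leviGraph P P) (by simpa) ?_
    exact containsCopy_iff_isContained.2 <|
      isContained_of_isContained_map Bgraph_exists_adj (containsCopy_iff_isContained.1 h)
  · rw [edgeSet_map, Set.ncard_image_of_injective _ e.sym2Map.injective,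
      ncard_edgeSet_blowUp_leviGraph, order_eq, Fintype.card_fin]

end Construction

section Kernel

open MeasureTheory
open scoped FourierTransform SchwartzMap ComplexOrder ComplexConjugate Convolution ContDiff

lemma fourier_conj_comp_neg (f : ℝ → ℂ) (w : ℝ) :
    𝓕 (fun x ↦ conj (f (-x))) w = conj (𝓕 f w) := by
  rw [Real.fourier_real_eq, Real.fourier_real_eq, ← integral_conj,
    ← integral_neg_eq_self (fun x ↦ Real.fourierChar (-(x * w)) • conj (f (-x)))]
  refine integral_congr_ae (.of_forall fun x ↦ ?_)
  simp [Circle.smul_def, Real.fourierChar_apply, ← Complex.exp_conj, map_ofNat]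

lemma fourier_comp_mul_left (f : ℝ → ℂ) {c : ℝ} (hc : c ≠ 0) (w : ℝ) :
    𝓕 (fun x ↦ f (c * x)) w = |c⁻¹| • 𝓕 f (w / c) := by
  rw [Real.fourier_real_eq, Real.fourier_real_eq, ← Measure.integral_comp_mul_left]
  refine integral_congr_ae (.of_forall fun x ↦ ?_)
  simp only
  congr 3
  field_simp

lemma exists_schwartz_fourier_nonneg : ∃ g : 𝓢(ℝ, ℂ), HasCompactSupport g ∧
    (∀ w, 0 ≤ 𝓕 g w) ∧ 0 < g 0 := by
  let b : ContDiffBump (0 : ℝ) := default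
  have smooth : ContDiff ℝ ∞ (fun x ↦ (b x : ℂ)) := Complex.ofRealCLM.contDiff.comp b.contDiff
  have supp : HasCompactSupport fun x ↦ (b x : ℂ) :=
    b.hasCompactSupport.comp_left Complex.ofReal_zero
  let f : 𝓢(ℝ, ℂ) := supp.toSchwartzMap smooth
  have f_apply (x : ℝ) : f x = b x := rfl
  have conv (x : ℝ) : SchwartzMap.convolution (.mul ℂ ℂ) f f x = ((f ⋆[.mul ℂ ℂ] f) x) :=
    SchwartzMap.convolution_apply ..
  -- As `f` is real and even, `𝓕 f` is real, so the Fourier transform of `f ⋆ f` is a real square.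
  refine ⟨SchwartzMap.convolution (.mul ℂ ℂ) f f, ?_, fun w ↦ ?_, ?_⟩
  · rw [funext conv]
    exact supp.convolution _ supp
  · have real : conj (𝓕 f w) = 𝓕 f w := by
      rw [SchwartzMap.fourier_coe, ← fourier_conj_comp_neg]
      simp_rw [f_apply, b.neg, Complex.conj_ofReal]
      rfl
    rw [SchwartzMap.fourier_convolution, SchwartzMap.pairing_apply_apply]
    simpa [real] using star_mul_self_nonneg (𝓕 f w)
  · have : (f ⋆[.mul ℂ ℂ] f) 0 = ((∫ x, b x * b x : ℝ) : ℂ) := by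
      simp [convolution_def, f_apply, b.neg, ← integral_complex_ofReal]
    rw [conv, this, Complex.zero_lt_real]
    exact (b.continuous.mul b.continuous).integral_pos_of_hasCompactSupport_nonneg_nonzero
      b.hasCompactSupport.mul_left (fun x ↦ mul_self_nonneg _) (x := 0)
      (mul_self_ne_zero.2
        (b.one_of_mem_closedBall (Metric.mem_closedBall_self b.rIn_pos.le) ▸ one_ne_zero))

lemma exists_schwartz_fourier_nonpos : ∃ φ : 𝓢(ℝ, ℂ), HasCompactSupport φ ∧
    (∃ R > 0, ∀ w, R < |w| → (𝓕 φ w).re ≤ 0) ∧ 0 < (φ 0).re := by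
  obtain ⟨g, hg, hpos, h0⟩ := exists_schwartz_fourier_nonneg
  let D := SchwartzMap.derivCLM ℂ ℂ
  have fourier_D (f : 𝓢(ℝ, ℂ)) (w : ℝ) : 𝓕 (D f) w = 2 * Real.pi * Complex.I * w * 𝓕 f w :=
    congrFun (Real.fourier_deriv f.integrable f.differentiable (D f).integrable) w
  have hD (f : 𝓢(ℝ, ℂ)) (hf : HasCompactSupport f) : HasCompactSupport (D f) :=
    hf.mono' ((subset_tsupport _).trans (f.tsupport_derivCLM_subset ℂ))
  have hg₀ : 0 < (g 0).re := (Complex.pos_iff.1 h0).1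
  let C := (|(D (D g) 0).re| + 1) / (g 0).re
  have hC : 0 < C := by positivity
  -- `𝓕 (C g + D² g) w = (C - (2πw)²) 𝓕 g w` is nonpositive as soon as `(2πw)² ≥ C`.
  refine ⟨C • g + D (D g), hg.smul_left.add (hD _ (hD _ hg)),
    ⟨√C / (2 * Real.pi), by positivity, fun w hw ↦ ?_⟩, ?_⟩
  · have hCw : C < (2 * Real.pi * w) ^ 2 := by
      rwa [← Real.sqrt_lt_sqrt_iff hC.le, Real.sqrt_sq_eq_abs, abs_mul,
        abs_of_pos Real.two_pi_pos, ← div_lt_iff₀' Real.two_pi_pos]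
    have : 𝓕 (C • g + D (D g)) w = ((C - (2 * Real.pi * w) ^ 2 : ℝ) : ℂ) * 𝓕 g w := by
      rw [FourierTransform.fourier_add, FourierTransform.fourier_smul, add_apply,
        smul_apply, fourier_D, fourier_D, Complex.real_smul]
      push_cast
      linear_combination (2 * Real.pi * w : ℂ) ^ 2 * 𝓕 g w * Complex.I_sq
    rw [this, Complex.re_ofReal_mul]
    exact mul_nonpos_of_nonpos_of_nonneg (by linarith) (Complex.nonneg_iff.1 (hpos w)).1
  · have : C * (g 0).re = |(D (D g) 0).re| + 1 := div_mul_cancel₀ _ hg₀.ne'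
    simp only [add_apply, smul_apply, Complex.add_re, Complex.smul_re,
      smul_eq_mul, this]
    linarith [neg_abs_le (D (D g) 0).re]

lemma exists_fourier_nonpos_of_lt {δ : ℝ} (hδ : 0 < δ) : ∃ φ : ℝ → ℂ, Continuous φ ∧
    HasCompactSupport φ ∧ Integrable (𝓕 φ) ∧ (∀ w, δ < |w| → (𝓕 φ w).re ≤ 0) ∧ 0 < (φ 0).re := by
  obtain ⟨φ, hφ, ⟨R, hR, hneg⟩, h0⟩ := exists_schwartz_fourier_nonpos
  have hc : 0 < δ / R := div_pos hδ hR
  have fourier_eq := funext (fourier_comp_mul_left φ hc.ne')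
  refine ⟨fun x ↦ φ (δ / R * x), by fun_prop,
    hφ.comp_homeomorph (Homeomorph.mulLeft₀ _ hc.ne'), ?_, fun w hw ↦ ?_, by simpa using h0⟩
  · rw [fourier_eq, ← SchwartzMap.fourier_coe]
    exact ((𝓕 φ).integrable.comp_div hc.ne').smul |(δ / R)⁻¹|
  · rw [fourier_eq, ← SchwartzMap.fourier_coe, Complex.smul_re]
    refine mul_nonpos_of_nonneg_of_nonpos (abs_nonneg _) (hneg _ ?_)
    rw [abs_div, abs_of_pos hc, lt_div_iff₀ hc, mul_div_cancel₀ _ hR.ne']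
    exact hw

end Kernel

section Tauberian

open MeasureTheory Filter Topology Complex
open scoped FourierTransform Real ComplexOrder

lemma fourierChar_smul_eq_exp_mul (x : ℝ) (z : ℂ) : 𝐞 x • z = exp (2 * π * x * I) * z := by
  rw [Circle.smul_def, Real.fourierChar_apply, smul_eq_mul]
  push_cast
  rfl

lemma integrable_fourierChar_smul {φ : ℝ → ℂ} (hφ : Integrable φ) (x : ℝ) :
    Integrable fun t ↦ 𝐞 (-(t * x)) • φ t := by
  simpa [mul_comm] using (Real.fourierIntegral_convergent_iff x).2 hφ

lemma LSeries_term_vertical (a : ℕ → ℂ) (σ t : ℝ) (n : ℕ) :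
    LSeries.term a (σ + 2 * π * t * I) n = 𝐞 (-(t * Real.log n)) • LSeries.term a σ n := by
  rcases eq_or_ne n 0 with rfl | hn
  · simp
  have hn' : (n : ℂ) ≠ 0 := mod_cast hn
  rw [LSeries.term_of_ne_zero hn, LSeries.term_of_ne_zero hn, fourierChar_smul_eq_exp_mul,
    cpow_add _ _ hn', cpow_def_of_ne_zero hn' (2 * π * t * I), div_mul_eq_div_div, div_eq_mul_inv,
    ← exp_neg, mul_comm, ← natCast_log]
  push_cast
  ring_nf

theorem hasSum_fourier_LSeries_mul {a : ℕ → ℂ} {σ : ℝ} (ha : LSeriesSummable a σ) {φ : ℝ → ℂ}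
    (hφ : Integrable φ) (w : ℝ) :
    HasSum (fun n ↦ LSeries.term a σ n * 𝓕 φ (w + Real.log n))
      (𝓕 (fun t : ℝ ↦ LSeries a (σ + 2 * π * t * I) * φ t) w) := by
  let F (n : ℕ) (t : ℝ) : ℂ := LSeries.term a σ n * (𝐞 (-(t * (w + Real.log n))) • φ t)
  have hF (n : ℕ) : Integrable (F n) :=
    (integrable_fourierChar_smul hφ _).const_mul _
  have hint (n : ℕ) : ∫ t, F n t = LSeries.term a σ n * 𝓕 φ (w + Real.log n) := by
    rw [integral_const_mul, Real.fourier_real_eq]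
  have hsum : Summable fun n ↦ ∫ t, ‖F n t‖ := by
    simp only [F, norm_mul, Circle.norm_smul, integral_const_mul]
    exact ha.norm.mul_right _
  have htsum (t : ℝ) :
      ∑' n, F n t = 𝐞 (-(t * w)) • (LSeries a (σ + 2 * π * t * I) * φ t) := by
    rw [LSeries, ← tsum_mul_right, fourierChar_smul_eq_exp_mul, ← tsum_mul_left]
    refine tsum_congr fun n ↦ ?_
    simp only [F, LSeries_term_vertical, fourierChar_smul_eq_exp_mul]
    rw [show -(t * (w + Real.log n)) = -(t * w) + -(t * Real.log n) by ring, ofReal_add, mul_add,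
      add_mul, exp_add]
    ring
  simpa only [htsum, hint, ← Real.fourier_real_eq] using
    hasSum_integral_of_summable_integral_norm hF hsum

lemma fourier_div_add_mul_I {φ : ℝ → ℂ} (hφ : Integrable φ) {ε : ℝ} (hε : 0 < ε) (w : ℝ) :
    𝓕 (fun t : ℝ ↦ φ t / (ε + 2 * π * t * I)) w =
      ∫ x in Set.Ioi (0 : ℝ), exp (-ε * x) * 𝓕 φ (w + x) := by
  let F (x t : ℝ) : ℂ := exp (-ε * x) * (𝐞 (-(t * (w + x))) • φ t)
  have inner_x (t : ℝ) : ∫ x in Set.Ioi (0 : ℝ), F x t =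
      𝐞 (-(t * w)) • (φ t / (ε + 2 * π * t * I)) := by
    have hF (x : ℝ) : F x t = 𝐞 (-(t * w)) • φ t * exp (-(ε + 2 * π * t * I) * x) := by
      simp only [F, fourierChar_smul_eq_exp_mul, mul_right_comm _ (φ t), ← mul_assoc, ← exp_add]
      congr 2
      push_cast
      ring
    simp_rw [hF]
    rw [integral_const_mul, integral_exp_mul_complex_Ioi (by simpa using hε), ofReal_zero, mul_zero,
      exp_zero, neg_div_neg_eq, smul_mul_assoc, mul_one_div]
  have inner_t (x : ℝ) : ∫ t, F x t = exp (-ε * x) * 𝓕 φ (w + x) := by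
    rw [integral_const_mul, Real.fourier_real_eq]
  rw [Real.fourier_real_eq]
  simp_rw [← inner_x, ← inner_t]
  refine (integral_integral_swap ?_).symm
  have hexp := integrableOn_exp_mul_complex_Ioi (a := -ε) (by simpa using hε) 0
  refine (hexp.mul_prod hφ).mono ?_ (.of_forall fun z ↦ ?_)
  · have hexp : Continuous fun z : ℝ × ℝ ↦ exp (-ε * z.1) := by fun_prop
    have hchar : Continuous fun z : ℝ × ℝ ↦ 𝐞 (-(z.2 * (w + z.1))) := by fun_prop
    exact hexp.aestronglyMeasurable.mul (hchar.aestronglyMeasurable.smul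
      hφ.aestronglyMeasurable.comp_snd)
  · simp [F, Function.uncurry]

lemma tendsto_integral_exp_neg_mul {f : ℝ → ℂ} (hf : IntegrableOn f (Set.Ioi 0)) :
    Tendsto (fun ε : ℝ ↦ ∫ x in Set.Ioi (0 : ℝ), exp (-ε * x) * f x) (𝓝[>] 0)
      (𝓝 (∫ x in Set.Ioi 0, f x)) := by
  refine tendsto_integral_filter_of_dominated_convergence (fun x ↦ ‖f x‖)
    (.of_forall fun ε ↦ ?_) ?_ hf.norm (.of_forall fun x ↦ ?_)
  · exact (Continuous.aestronglyMeasurable (by fun_prop)).mul hf.aestronglyMeasurable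
  · filter_upwards [self_mem_nhdsWithin] with ε hε
    filter_upwards [ae_restrict_mem measurableSet_Ioi] with x hx
    rw [norm_mul, norm_exp]
    refine mul_le_of_le_one_left (norm_nonneg _) (Real.exp_le_one_iff.2 ?_)
    have := mul_pos (Set.mem_Ioi.1 hε) (Set.mem_Ioi.1 hx)
    simpa using this.le
  · have : Continuous fun ε : ℝ ↦ exp (-ε * x) * f x := by fun_prop
    simpa using (this.tendsto 0).mono_left (nhdsWithin_le_nhds (s := Set.Ioi 0))

lemma continuousOn_fourier_vertical_mul {h : ℂ → ℂ} {σ₀ : ℝ} (hh : ContinuousOn h {s | σ₀ ≤ s.re})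
    {φ : ℝ → ℂ} (hφ : Continuous φ) (hφs : HasCompactSupport φ) (w : ℝ) :
    ContinuousOn (fun σ : ℝ ↦ 𝓕 (fun t : ℝ ↦ h (σ + 2 * π * t * I) * φ t) w) (Set.Ici σ₀) := by
  simp_rw [Real.fourier_real_eq]
  refine continuousOn_integral_of_compact_support hφs.isCompact ?_ fun σ t _ ht ↦ ?_
  · refine ContinuousOn.smul (by fun_prop) (.mul ?_ (by fun_prop))
    exact hh.comp (by fun_prop) fun p hp ↦ by simpa using hp
  · simp [image_eq_zero_of_notMem_tsupport ht]

variable {h : ℂ → ℂ} {φ : ℝ → ℂ}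

lemma fourier_LSeries_mul_eq {a : ℕ → ℂ} {A : ℂ} (hh : ContinuousOn h {s | 1 ≤ s.re})
    (hL : ∀ s : ℂ, 1 < s.re → LSeries a s = h s + A / (s - 1))
    (hφ : Continuous φ) (hφs : HasCompactSupport φ) {σ : ℝ} (hσ : 1 < σ) (w : ℝ) :
    𝓕 (fun t : ℝ ↦ LSeries a (σ + 2 * π * t * I) * φ t) w =
      𝓕 (fun t : ℝ ↦ h (σ + 2 * π * t * I) * φ t) w +
        A * ∫ x in Set.Ioi (0 : ℝ), exp (-(σ - 1 : ℝ) * x) * 𝓕 φ (w + x) := by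
  have hpole (t : ℝ) : ((σ - 1 : ℝ) + 2 * π * t * I : ℂ) ≠ 0 := fun h0 ↦ by
    simpa [sub_eq_zero, hσ.ne'] using congrArg re h0
  have int_h : Integrable fun t : ℝ ↦ h (σ + 2 * π * t * I) * φ t :=
    (Continuous.mul (hh.comp_continuous (by fun_prop) fun t ↦ by simpa using hσ.le) hφ)
      |>.integrable_of_hasCompactSupport hφs.mul_left
  have int_pole : Integrable fun t : ℝ ↦ φ t / ((σ - 1 : ℝ) + 2 * π * t * I) := by
    simp_rw [div_eq_inv_mul]
    exact (Continuous.mul (Continuous.inv₀ (by fun_prop) hpole) hφ).integrable_of_hasCompactSupport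
      hφs.mul_left
  rw [← fourier_div_add_mul_I (hφ.integrable_of_hasCompactSupport hφs) (sub_pos.2 hσ)]
  simp_rw [Real.fourier_real_eq]
  rw [← integral_const_mul, ← integral_add (integrable_fourierChar_smul int_h w)
    ((integrable_fourierChar_smul int_pole w).const_mul A)]
  refine integral_congr_ae (.of_forall fun t ↦ ?_)
  simp only [fourierChar_smul_eq_exp_mul, hL (σ + 2 * π * t * I) (by simpa using hσ)]
  push_cast
  ring

lemma re_fourier_LSeries_mul_nonpos {a : ℕ → ℝ} (ha : ∀ n, 0 ≤ a n) {σ : ℝ}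
    (hsum : LSeriesSummable (fun n ↦ a n) σ) (hφ : Integrable φ) {w : ℝ}
    (hw : ∀ n, a n ≠ 0 → (𝓕 φ (w + Real.log n)).re ≤ 0) :
    (𝓕 (fun t : ℝ ↦ LSeries (fun n ↦ a n) (σ + 2 * π * t * I) * φ t) w).re ≤ 0 := by
  rw [← (hasSum_re (hasSum_fourier_LSeries_mul hsum hφ w)).tsum_eq]
  refine tsum_nonpos fun n ↦ ?_
  obtain ⟨hre, him⟩ := nonneg_iff.1 (LSeries.term_nonneg (a := fun n ↦ a n) (n := n)
    (zero_le_real.2 (ha n)) σ)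
  rw [mul_re, ← him, zero_mul, sub_zero]
  rcases eq_or_ne (a n) 0 with h0 | h0
  · simp [LSeries.term_def, h0]
  · exact mul_nonpos_of_nonneg_of_nonpos hre (hw n h0)

lemma re_fourier_add_integral_nonpos {a : ℕ → ℝ} {A : ℂ} (ha : ∀ n, 0 ≤ a n)
    (hsum : ∀ s : ℂ, 1 < s.re → LSeriesSummable (fun n ↦ a n) s)
    (hh : ContinuousOn h {s | 1 ≤ s.re})
    (hL : ∀ s : ℂ, 1 < s.re → LSeries (fun n ↦ a n) s = h s + A / (s - 1))
    (hφ : Continuous φ) (hφs : HasCompactSupport φ) (hφF : Integrable (𝓕 φ)) {w : ℝ}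
    (hw : ∀ n, a n ≠ 0 → (𝓕 φ (w + Real.log n)).re ≤ 0) :
    (𝓕 (fun t : ℝ ↦ h (1 + 2 * π * t * I) * φ t) w +
      A * ∫ x in Set.Ioi (0 : ℝ), 𝓕 φ (w + x)).re ≤ 0 := by
  have lim_h : Tendsto (fun σ : ℝ ↦ 𝓕 (fun t : ℝ ↦ h (σ + 2 * π * t * I) * φ t) w) (𝓝[>] 1)
      (𝓝 (𝓕 (fun t : ℝ ↦ h (1 + 2 * π * t * I) * φ t) w)) := by
    simpa using ((continuousOn_fourier_vertical_mul hh hφ hφs w) 1 Set.self_mem_Ici).mono_left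
      (nhdsWithin_mono _ Set.Ioi_subset_Ici_self)
  have lim_pole : Tendsto (fun σ : ℝ ↦ ∫ x in Set.Ioi (0 : ℝ), exp (-(σ - 1 : ℝ) * x) *
      𝓕 φ (w + x)) (𝓝[>] 1) (𝓝 (∫ x in Set.Ioi (0 : ℝ), 𝓕 φ (w + x))) := by
    refine (tendsto_integral_exp_neg_mul (hφF.comp_add_left w).integrableOn).comp ?_
    refine tendsto_nhdsWithin_of_tendsto_nhds_of_eventually_within _ ?_ ?_
    · simpa using ((continuous_sub_right (1 : ℝ)).tendsto 1).mono_left nhdsWithin_le_nhds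
    · filter_upwards [self_mem_nhdsWithin] with σ hσ using sub_pos.2 (Set.mem_Ioi.1 hσ)
  refine le_of_tendsto ((continuous_re.tendsto _).comp (lim_h.add (lim_pole.const_mul _))) ?_
  filter_upwards [self_mem_nhdsWithin] with σ hσ
  rw [Function.comp_apply, ← fourier_LSeries_mul_eq hh hL hφ hφs hσ]
  exact re_fourier_LSeries_mul_nonpos ha (hsum σ (by simpa using hσ))
    (hφ.integrable_of_hasCompactSupport hφs) hw

lemma tendsto_fourier_add_integral (hφ : Continuous φ) (hφi : Integrable φ) (hφF : Integrable (𝓕 φ))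
    (f : ℝ → ℂ) (A : ℂ) :
    Tendsto (fun w ↦ 𝓕 f w + A * ∫ x in Set.Ioi (0 : ℝ), 𝓕 φ (w + x)) atBot (𝓝 (A * φ 0)) := by
  have inversion : ∫ x, 𝓕 φ x = φ 0 := by
    simpa [Real.fourierInv_eq] using congrFun (hφ.fourierInv_fourier_eq hφi hφF) 0
  have shift (w : ℝ) : ∫ x in Set.Ioi (0 : ℝ), 𝓕 φ (w + x) = ∫ x in Set.Ioi w, 𝓕 φ x := by
    simpa using (measurePreserving_add_left volume w).setIntegral_preimage_emb
      (measurableEmbedding_addLeft w) (𝓕 φ) (Set.Ioi w)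
  have lim_tail : Tendsto (fun w ↦ ∫ x in Set.Ioi w, 𝓕 φ x) atBot (𝓝 (∫ x, 𝓕 φ x)) :=
    (aecover_Ioi tendsto_id).integral_tendsto_of_countably_generated hφF
  have riemann_lebesgue : Tendsto (𝓕 f) atBot (𝓝 0) :=
    (Real.zero_at_infty_fourier f).mono_left atBot_le_cocompact
  simpa [shift, inversion] using riemann_lebesgue.add (lim_tail.const_mul A)

theorem eventually_exists_ne_zero_abs_log_sub_le {a : ℕ → ℝ} {A : ℝ} (ha : ∀ n, 0 ≤ a n)
    (hsum : ∀ s : ℂ, 1 < s.re → LSeriesSummable (fun n ↦ a n) s)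
    (hh : ContinuousOn h {s | 1 ≤ s.re}) (hA : 0 < A)
    (hL : ∀ s : ℂ, 1 < s.re → LSeries (fun n ↦ a n) s = h s + A / (s - 1)) {δ : ℝ} (hδ : 0 < δ) :
    ∀ᶠ u : ℝ in atTop, ∃ n, a n ≠ 0 ∧ |Real.log n - u| ≤ δ := by
  obtain ⟨φ, hφ, hφs, hφF, hneg, hpos⟩ := exists_fourier_nonpos_of_lt hδ
  have lim := (continuous_re.tendsto _).comp <| (tendsto_fourier_add_integral hφ
    (hφ.integrable_of_hasCompactSupport hφs) hφF
    (fun t : ℝ ↦ h (1 + 2 * π * t * I) * φ t) A).comp tendsto_neg_atTop_atBot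
  have hpos' : 0 < (A * φ 0 : ℂ).re := by rw [re_ofReal_mul]; exact mul_pos hA hpos
  filter_upwards [lim.eventually (lt_mem_nhds hpos')] with u hu
  by_contra! hgap
  refine hu.not_ge (re_fourier_add_integral_nonpos ha hsum hh hL hφ hφs hφF fun n hn ↦ hneg _ ?_)
  simpa [neg_add_eq_sub] using hgap n hn

end Tauberian

section PrimePowers

open ArithmeticFunction Filter Topology

lemma exists_continuousOn_LSeries_vonMangoldt_eq : ∃ h : ℂ → ℂ, ContinuousOn h {s | 1 ≤ s.re} ∧
    ∀ s : ℂ, 1 < s.re → LSeries (fun n ↦ (Λ n : ℝ)) s = h s + (1 : ℝ) / (s - 1) := by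
  refine ⟨vonMangoldt.LFunctionResidueClassAux (1 : ZMod 1),
    vonMangoldt.continuousOn_LFunctionResidueClassAux 1, fun s hs ↦ ?_⟩
  have residueClass_eq : vonMangoldt.residueClass (1 : ZMod 1) = fun n ↦ Λ n :=
    Set.indicator_eq_self.2 fun n _ ↦ Subsingleton.elim _ _
  simp [vonMangoldt.eqOn_LFunctionResidueClassAux isUnit_one hs, residueClass_eq]

lemma eventually_exists_isPrimePow_abs_log_sub_le {δ : ℝ} (hδ : 0 < δ) :
    ∀ᶠ u : ℝ in atTop, ∃ q : ℕ, IsPrimePow q ∧ |Real.log q - u| ≤ δ := by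
  obtain ⟨h, hh, hL⟩ := exists_continuousOn_LSeries_vonMangoldt_eq
  simpa only [ne_eq, vonMangoldt_eq_zero_iff, not_not] using
    eventually_exists_ne_zero_abs_log_sub_le (fun _ ↦ vonMangoldt_nonneg)
      (fun _ ↦ LSeriesSummable_vonMangoldt) hh one_pos hL hδ

theorem eventually_exists_isPrimePow_mem_Icc {α β : ℝ} (hα : 0 < α) (hαβ : α < β) :
    ∀ᶠ x : ℝ in atTop, ∃ q : ℕ, IsPrimePow q ∧ (q : ℝ) ∈ Set.Icc (α * x) (β * x) := by
  have hβ := hα.trans hαβ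
  have hδ : 0 < (Real.log β - Real.log α) / 2 := half_pos (sub_pos.2 (Real.log_lt_log hα hαβ))
  have hu : Tendsto (fun x ↦ Real.log x + (Real.log α + Real.log β) / 2) atTop atTop :=
    tendsto_atTop_add_const_right _ _ Real.tendsto_log_atTop
  filter_upwards [hu.eventually (eventually_exists_isPrimePow_abs_log_sub_le hδ),
    eventually_gt_atTop 0] with x ⟨q, hq, hlog⟩ hx
  have hq0 : (0 : ℝ) < q := mod_cast hq.pos
  obtain ⟨hlo, hhi⟩ := abs_le.1 hlog
  refine ⟨q, hq, ?_, ?_⟩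
  · rw [← Real.log_le_log_iff (mul_pos hα hx) hq0, Real.log_mul hα.ne' hx.ne']
    linarith
  · rw [← Real.log_le_log_iff hq0 (mul_pos hβ hx), Real.log_mul hβ.ne' hx.ne']
    linarith

end PrimePowers

section Asymptotics

open Filter Topology

lemma sq_mul_sqrt_div_pow_three {k x : ℝ} (hk : 0 < k) (hx : 0 ≤ x) :
    k ^ 2 * √(x / (2 * k)) ^ 3 = √k / (2 * √2) * x ^ (3 / 2 : ℝ) := by
  have rpow_eq : x ^ (3 / 2 : ℝ) = √x ^ 3 := by
    rw [Real.sqrt_eq_rpow, ← Real.rpow_mul_natCast hx]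
    norm_num
  rw [rpow_eq, Real.sqrt_div hx, Real.sqrt_mul zero_le_two]
  have := Real.sqrt_pos.2 hk
  have sqrt_k_pow_four : √k ^ 4 = k ^ 2 := by rw [pow_mul √k 2 2, Real.sq_sqrt hk.le]
  field_simp
  rw [Real.sq_sqrt zero_le_two, sqrt_k_pow_four]
  ring

lemma exists_mem_Ioo_sub_le_mul_pow_three (c : ℝ) {ε : ℝ} (hε : 0 < ε) :
    ∃ α ∈ Set.Ioo (0 : ℝ) 1, c - ε ≤ c * α ^ 3 := by
  have lim : Tendsto (fun α : ℝ ↦ c * α ^ 3) (𝓝[<] 1) (𝓝 c) := by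
    have : Continuous fun α : ℝ ↦ c * α ^ 3 := by fun_prop
    simpa using (this.tendsto 1).mono_left nhdsWithin_le_nhds
  exact ((eventually_mem_set.2 (Ioo_mem_nhdsLT one_pos)).and
    (lim.eventually (le_mem_nhds (sub_lt_self c hε)))).exists

theorem eventually_exists_colorable_not_containsCopy_Bgraph {k t : ℕ} (hk : 0 < k)
    (hkt : 2 * k ≤ t + 1) {ε : ℝ} (hε : 0 < ε) :
    ∀ᶠ n : ℕ in atTop, ∃ G : SimpleGraph (Fin n),
      G.Colorable 2 ∧ ¬ ContainsCopy (Bgraph t) G ∧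
        (√k / (2 * √2) - ε) * (n : ℝ) ^ (3 / 2 : ℝ) ≤ G.edgeSet.ncard := by
  have hk₀ : (0 : ℝ) < k := mod_cast hk
  obtain ⟨α, ⟨hα₀, hα₁⟩, hα⟩ := exists_mem_Ioo_sub_le_mul_pow_three (√k / (2 * √2)) hε
  obtain ⟨β, hαβ, hβ₁⟩ := exists_between hα₁
  have hS : Tendsto (fun n : ℕ ↦ √(n / (2 * k))) atTop atTop := Real.tendsto_sqrt_atTop.comp
    (tendsto_natCast_atTop_atTop.atTop_div_const (by positivity))
  filter_upwards [hS.eventually (eventually_exists_isPrimePow_mem_Icc hα₀ hαβ),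
    hS.eventually (eventually_ge_atTop (1 / (1 - β)))] with n ⟨q, hq, hαq, hqβ⟩ hβS
  set S := √(n / (2 * k))
  have hqS : (q : ℝ) + 1 ≤ S := by
    rw [div_le_iff₀ (sub_pos.2 hβ₁)] at hβS
    linarith
  have hn : 2 * k * (q ^ 2 + q + 1) ≤ n := by
    have hq_sq : ((q : ℝ) ^ 2 + q + 1) ≤ n / (2 * k) := by
      rw [← Real.sq_sqrt (show (0 : ℝ) ≤ n / (2 * k) by positivity)]
      nlinarith [hq.pos]
    rw [le_div_iff₀' (by positivity)] at hq_sq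
    exact_mod_cast hq_sq
  obtain ⟨G, hG, hfree, hcard⟩ := exists_colorable_not_containsCopy_Bgraph hq hkt hn
  refine ⟨G, hG, hfree, ?_⟩
  calc (√k / (2 * √2) - ε) * (n : ℝ) ^ (3 / 2 : ℝ)
      ≤ √k / (2 * √2) * α ^ 3 * (n : ℝ) ^ (3 / 2 : ℝ) := by gcongr
    _ = k ^ 2 * (α * S) ^ 3 := by
      rw [mul_right_comm, ← sq_mul_sqrt_div_pow_three hk₀ n.cast_nonneg]
      ring
    _ ≤ k ^ 2 * (q : ℝ) ^ 3 := by gcongr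
    _ ≤ k ^ 2 * (q ^ 2 + q + 1) * (q + 1) := by
      rw [mul_assoc]
      gcongr
      nlinarith [q.cast_nonneg (α := ℝ)]
    _ = G.edgeSet.ncard := by
      rw [hcard]
      push_cast
      ring

end Asymptotics

theorem ex_bip_Bt_lower_odd_general (t : ℕ) (ht : 1 ≤ t) (ε : ℝ) (hε : 0 < ε) :
    ∃ N : ℕ, ∀ n : ℕ, N ≤ n → ∃ G : SimpleGraph (Fin n),
      G.Colorable 2 ∧ ¬ ContainsCopy (Bgraph t) G ∧
      (Real.sqrt (((t + 1) / 2 : ℕ) : ℝ) / (2 * Real.sqrt 2) - ε) * (n : ℝ) ^ (3/2 : ℝ)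
        ≤ (G.edgeSet.ncard : ℝ) :=
  Filter.eventually_atTop.1 <|
    eventually_exists_colorable_not_containsCopy_Bgraph (by lia) (by lia) hε

theorem ex_bip_Bt_lower_odd (t : ℕ) (ht : 1 ≤ t) (hodd : Odd t) (ε : ℝ) (hε : 0 < ε) :
    ∃ N : ℕ, ∀ n : ℕ, N ≤ n → ∃ G : SimpleGraph (Fin n),
      G.Colorable 2 ∧ ¬ ContainsCopy (Bgraph t) G ∧
      (Real.sqrt (((t + 1) / 2 : ℕ) : ℝ) / (2 * Real.sqrt 2) - ε) * (n : ℝ) ^ (3/2 : ℝ)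
        ≤ (G.edgeSet.ncard : ℝ) :=
  ex_bip_Bt_lower_odd_general t ht ε hε
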